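/- arXiv:math/0207246 — 4 statements merged into one kernel-verified Lean document; each statement's English description precedes it below -/
import Mathlib

section
/- If G is a group of order 60 with more than one Sylow 5-subgroup, then G is isomorphic to the alternating group A5. -/
theorem aux_fact {m : ℕ} (hm : ¬ 5 ∣ m) : (5 * m).factorization 5 = 1 := by
  have hm0 : m ≠ 0 := by rintro rfl; simp at hm
  rw [Nat.factorization_mul (by norm_num) hm0]
  simp [Nat.factorization_eq_zero_of_not_dvd hm, Nat.Prime.factorization_self Nat.prime_five]

theorem aux_card {H : Type*} [Group H] [Finite H] {m : ℕ} (h : Nat.card H = 5 * m)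
    (hm : ¬ 5 ∣ m) (P : Sylow 5 H) : Nat.card P = 5 := by
  have : Fact (Nat.Prime 5) := ⟨Nat.prime_five⟩
  rw [P.card_eq_multiplicity, h, aux_fact hm, pow_one]

theorem aux_dvd {H : Type*} [Group H] [Finite H] {m : ℕ} (h : Nat.card H = 5 * m)
    (hm : ¬ 5 ∣ m) : Nat.card (Sylow 5 H) ∣ m ∧ Nat.card (Sylow 5 H) % 5 = 1 := by
  have : Fact (Nat.Prime 5) := ⟨Nat.prime_five⟩
  constructor
  · obtain ⟨P⟩ : Nonempty (Sylow 5 H) := inferInstance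
    have h1 := P.card_dvd_index
    have h2 := (P : Subgroup H).card_mul_index
    have h3 := aux_card h hm P
    have : (P : Subgroup H).index = m := by
      rw [h] at h2
      change Nat.card (P : Subgroup H) = 5 at h3
      rw [h3] at h2; omega
    rwa [this] at h1
  · exact card_sylow_modEq_one 5 H

/-- a group of order `5 * m`, `m ≤ 3`, has one Sylow 5-subgroup -/
theorem aux_small {H : Type*} [Group H] [Finite H] {m : ℕ} (h : Nat.card H = 5 * m)
    (h0 : 0 < m) (hm : m < 5) : Nat.card (Sylow 5 H) = 1 := by
  obtain ⟨h1, h2⟩ := aux_dvd h (fun hd => by have := Nat.le_of_dvd h0 hd; omega)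
  have := Nat.le_of_dvd h0 h1
  omega

theorem aux_normal {G : Type*} [Group G] [Finite G] (M : Subgroup G) [M.Normal] {m n : ℕ}
    (hG : Nat.card G = 5 * n) (hn : ¬ 5 ∣ n) (hM : Nat.card M = 5 * m)
    (h1 : Nat.card (Sylow 5 M) = 1) : Nat.card (Sylow 5 G) = 1 := by
  have : Fact (Nat.Prime 5) := ⟨Nat.prime_five⟩
  have hm : ¬ 5 ∣ m := by
    rintro ⟨k, rfl⟩
    have := M.card_subgroup_dvd_card
    rw [hG, hM] at this
    exact hn ((Dvd.intro k rfl).trans (Nat.dvd_of_mul_dvd_mul_left (by norm_num) this))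
  obtain ⟨hs, ⟨S⟩⟩ := Nat.card_eq_one_iff_unique.mp h1
  have hc := aux_card hM hm S
  have : (S : Subgroup M).Characteristic := Sylow.characteristic_of_subsingleton S
  have hN : ((S : Subgroup M).map M.subtype).Normal := inferInstance
  have hcard : Nat.card ((S : Subgroup M).map M.subtype) = 5 := by
    rw [Subgroup.card_map_of_injective M.subtype_injective]; exact hc
  have hu := Sylow.unique_of_normal
    (Sylow.ofCard ((S : Subgroup M).map M.subtype) (by rw [hG, aux_fact hn, hcard, pow_one])) hN
  exact Nat.card_unique

theorem aux_thirty {H : Type*} [Group H] [Finite H] (h : Nat.card H = 30) :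
    Nat.card (Sylow 5 H) = 1 := by
  have : Fact (Nat.Prime 2) := ⟨Nat.prime_two⟩
  obtain ⟨P⟩ : Nonempty (Sylow 2 H) := inferInstance
  have hP : Nat.card P = 2 := by
    rw [P.card_eq_multiplicity, h]
    have : (30 : ℕ).factorization 2 = 1 := by
      rw [show 30 = 2 * 15 by norm_num, Nat.factorization_mul (by norm_num) (by norm_num)]
      simp [Nat.factorization_eq_zero_of_not_dvd (show ¬ 2 ∣ 15 by norm_num),
        Nat.Prime.factorization_self Nat.prime_two]
    rw [this, pow_one]
  have hcyc : IsCyclic P := isCyclic_of_prime_card hP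
  have hmin : (Nat.card H).minFac = 2 := by rw [h]; norm_num
  have hK := (hcyc.isComplement' hmin).card_mul_card
  change _ * Nat.card P = _ at hK
  rw [hP, h] at hK
  exact aux_normal (MonoidHom.transferSylow P (hcyc.normalizer_le_centralizer hmin)).ker
    (m := 3) (n := 6) h (by norm_num) (by omega) (aux_small (m := 3) (by omega) (by norm_num)
      (by norm_num))

theorem aux_faithful {G : Type*} [Group G] [Finite G] (hG : Nat.card G = 60)
    (h6 : Nat.card (Sylow 5 G) = 6) :
    Function.Injective (MulAction.toPermHom G (Sylow 5 G)) := by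
  have : Fact (Nat.Prime 5) := ⟨Nat.prime_five⟩
  rw [← MonoidHom.ker_eq_bot_iff]
  set K := (MulAction.toPermHom G (Sylow 5 G)).ker with hK
  obtain ⟨P⟩ : Nonempty (Sylow 5 G) := inferInstance
  have hN := P.card_eq_index_normalizer
  have hle : K ≤ Subgroup.normalizer (P : Set G) := by
    intro g hg
    rw [← Sylow.smul_eq_iff_mem_normalizer]
    have : MulAction.toPermHom G (Sylow 5 G) g = 1 := hg
    exact congrArg (fun f => f P) this
  have hc := (Subgroup.normalizer (P : Set G)).card_mul_index
  rw [← hN, h6, hG] at hc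
  have hd : Nat.card K ∣ 10 := by
    have := Subgroup.card_dvd_of_le hle
    rwa [show Nat.card (Subgroup.normalizer (P : Set G)) = 10 by omega] at this
  have hcases : Nat.card K = 1 ∨ Nat.card K = 2 ∨ Nat.card K = 5 ∨ Nat.card K = 10 := by
    have h1 : Nat.card K ∈ Nat.divisors 10 := by simp [hd]
    rw [show Nat.divisors 10 = {1, 2, 5, 10} by decide] at h1
    simpa using h1
  have key : ∀ (M : Subgroup G) [M.Normal] (m : ℕ), Nat.card M = 5 * m → 0 < m → m < 5 → False := by
    intro M _ m hM h0 h5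
    have := aux_normal M (n := 12) hG (by norm_num) hM (aux_small hM h0 h5)
    omega
  rcases hcases with h | h | h | h
  · exact Subgroup.card_eq_one.mp h
  · exfalso
    have hq : Nat.card (G ⧸ K) = 30 := by
      have := K.card_mul_index
      rw [h, hG] at this
      rw [← Subgroup.index_eq_card]; omega
    obtain ⟨hs, ⟨S⟩⟩ := Nat.card_eq_one_iff_unique.mp (aux_thirty hq)
    have hS := aux_card (m := 6) hq (by norm_num) S
    have : (S : Subgroup (G ⧸ K)).Normal := Sylow.normal_of_subsingleton S
    have hi := Subgroup.index_comap_of_surjective (S : Subgroup (G ⧸ K))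
      (QuotientGroup.mk'_surjective K)
    have h1 := (S : Subgroup (G ⧸ K)).card_mul_index
    have h2 := ((S : Subgroup (G ⧸ K)).comap (QuotientGroup.mk' K)).card_mul_index
    change Nat.card (S : Subgroup (G ⧸ K)) = 5 at hS
    rw [hS, hq] at h1
    rw [hi, hG, show (S : Subgroup (G ⧸ K)).index = 6 by omega] at h2
    exact key ((S : Subgroup (G ⧸ K)).comap (QuotientGroup.mk' K)) 2 (by omega)
      (by norm_num) (by norm_num)
  · exact (key K 1 h (by norm_num) (by norm_num)).elim
  · exact (key K 2 h (by norm_num) (by norm_num)).elim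

theorem aux_even {G : Type*} [Group G] [Finite G] (hG : Nat.card G = 60)
    (h6 : Nat.card (Sylow 5 G) = 6) (f : G →* ℤˣ) (g : G) : f g = 1 := by
  have h1 := Subgroup.index_ker f
  have h2 := f.ker.card_mul_index
  have h3 : Nat.card f.range ∣ 2 := by
    have := f.range.card_subgroup_dvd_card
    simpa using this
  rcases (Nat.dvd_prime Nat.prime_two).mp h3 with h | h
  · have := Subgroup.card_eq_one.mp h
    have h4 : f g ∈ f.range := ⟨g, rfl⟩
    rw [this] at h4
    exact h4
  · exfalso
    rw [h1, h, hG] at h2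
    have h30 : Nat.card f.ker = 30 := by omega
    have := aux_normal f.ker (m := 6) (n := 12) hG (by norm_num) h30 (aux_thirty h30)
    omega

/-- A subgroup of index 6 of `A_6`, up to embedding, embeds into `S_5`. -/
theorem aux_exotic {G X : Type*} [Group G] [Finite G] [Fintype X] [DecidableEq X]
    (hG : Nat.card G = 60)
    (hX : Nat.card X = 6) (f : G →* alternatingGroup X) (hf : Function.Injective f) :
    ∃ F : G →* Equiv.Perm (Fin 5), Function.Injective F := by
  have hr : Nat.card f.range = 60 := by
    rw [← hG]; exact (Nat.card_congr (MonoidHom.ofInjective hf).toEquiv).symm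
  have : Nontrivial X := (Finite.one_lt_card_iff_nontrivial).mp (by omega)
  have hA : Nat.card (alternatingGroup X) = 360 := by
    rw [nat_card_alternatingGroup, hX]; rfl
  have hi : f.range.index = 6 := by
    have := f.range.card_mul_index
    rw [hr, hA] at this; omega
  have hcore : f.range.normalCore = ⊥ := by
    refine (alternatingGroup.normal_subgroup_eq_bot_or_eq_top (by omega)).resolve_right ?_
    intro ht
    have := f.range.normalCore_le
    rw [ht, top_le_iff] at this
    rw [this] at hi
    simp at hi
  rw [Subgroup.normalCore_eq_ker, MonoidHom.ker_eq_bot_iff] at hcore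
  set Q := alternatingGroup X ⧸ f.range with hQ
  let φ : G →* Equiv.Perm Q := (MulAction.toPermHom (alternatingGroup X) Q).comp f
  have hφ : Function.Injective φ := hcore.comp hf
  let o : Q := ((1 : alternatingGroup X) : alternatingGroup X ⧸ f.range)
  have hfix : ∀ g, φ g o = o := by
    intro g
    change f g • o = o
    rw [← MulAction.mem_stabilizer_iff, MulAction.stabilizer_quotient]
    exact ⟨g, rfl⟩
  have hne : ∀ g x, φ g x ≠ o ↔ x ≠ o := by
    intro g x
    rw [not_iff_not]
    constructor
    · intro h; exact (φ g).injective (h.trans (hfix g).symm)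
    · rintro rfl; exact hfix g
  let ψ : G →* Equiv.Perm {x : Q // x ≠ o} :=
    { toFun := fun g => (φ g).subtypePerm (hne g)
      map_one' := by ext x; simp
      map_mul' := by intro a b; ext x; simp; rfl }
  have hψ : Function.Injective ψ := by
    intro a b hab
    apply hφ
    ext x
    by_cases hx : x = o
    · rw [hx, hfix, hfix]
    · exact congrArg (fun e : Equiv.Perm {x : Q // x ≠ o} => (e ⟨x, hx⟩ : Q)) hab
  have hQc : Nat.card Q = 6 := hi
  have h5 : Nat.card {x : Q // x ≠ o} = 5 := by
    classical
    have := Fintype.ofFinite Q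
    rw [Nat.card_eq_fintype_card] at hQc ⊢
    rw [Fintype.card_subtype_compl, hQc, Fintype.card_subtype_eq]
  let e : {x : Q // x ≠ o} ≃ Fin 5 := Finite.equivFinOfCardEq h5
  exact ⟨e.permCongrHom.toMonoidHom.comp ψ, e.permCongrHom.injective.comp hψ⟩

theorem order_60_multiple_sylow5_iso_A5 (G : Type*) [Group G] [Fintype G]
    (hG : Fintype.card G = 60) (hSyl : 1 < Nat.card (Sylow 5 G)) :
    Nonempty (G ≃* alternatingGroup (Fin 5)) := by
  classical
  have hG' : Nat.card G = 60 := by rw [Nat.card_eq_fintype_card, hG]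
  have h6 : Nat.card (Sylow 5 G) = 6 := by
    obtain ⟨h1, h2⟩ := aux_dvd (m := 12) hG' (by norm_num)
    have := Nat.le_of_dvd (by norm_num) h1
    generalize Nat.card (Sylow 5 G) = k at *
    interval_cases k <;> omega
  letI := Fintype.ofFinite (Sylow 5 G)
  let f : G →* alternatingGroup (Sylow 5 G) :=
    (MulAction.toPermHom G (Sylow 5 G)).codRestrict _ (fun g =>
      Equiv.Perm.mem_alternatingGroup.mpr
        (aux_even hG' h6 (Equiv.Perm.sign.comp (MulAction.toPermHom G (Sylow 5 G))) g))
  have hf : Function.Injective f := by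
    intro a b hab
    exact aux_faithful hG' h6 (congrArg Subtype.val hab)
  obtain ⟨F, hF⟩ := aux_exotic hG' h6 f hf
  have hr : Nat.card F.range = 60 := by
    rw [← hG']; exact (Nat.card_congr (MonoidHom.ofInjective hF).toEquiv).symm
  have hi : F.range.index = 2 := by
    have := F.range.card_mul_index
    rw [hr, Nat.card_perm, Nat.card_fin, show Nat.factorial 5 = 120 from rfl] at this
    omega
  have := Equiv.Perm.eq_alternatingGroup_of_index_eq_two hi
  exact ⟨(MonoidHom.ofInjective hF).trans (MulEquiv.subgroupCongr this)⟩
end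

section
/- There is no finite group G of order 72 containing subgroups U ≅ D3 and V ≅ D2 with U ∩ V ≅ Z/2Z such that U and V generate G. -/
open Equiv Subgroup
set_option maxRecDepth 100000 in
set_option synthInstance.maxHeartbeats 0 in
set_option synthInstance.maxSize 4000 in
set_option maxHeartbeats 4000000 in
theorem perm_fact : ∀ a : Perm (Fin 4), a^3 = 1 → a ≠ 1 → ∀ s : Perm (Fin 4), s^2=1 → s*a*s = a⁻¹ →
  ∀ t : Perm (Fin 4), t^2 = 1 → s*t=t*s → (∀ i, ¬ (a i = i ∧ s i = i ∧ t i = i)) →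
  Equiv.Perm.sign s = -1 ∧ (((a*t)^4=1 ∧ (a*t)^2≠1 ∧ s*t = a⁻¹*t*a*t*a⁻¹) ∨ 
   ((a*(s*t))^4=1 ∧ (a*(s*t))^2≠1 ∧ s*(s*t) = a⁻¹*(s*t)*a*(s*t)*a⁻¹)) := by
  decide
theorem d3a : ∀ s : DihedralGroup 3, s ≠ 1 → s^2=1 → s * .r 1 * s = (.r 1)⁻¹ ∧ ∀ u : DihedralGroup 3, ∃ i : Fin 3, ∃ j : Fin 2, u = (.r 1)^(i:ℕ)*s^(j:ℕ) := by decide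
theorem d2a : ∀ s : DihedralGroup 2, s ≠ 1 → ∃ t : DihedralGroup 2, t^2=1 ∧ s*t=t*s ∧ ∀ v : DihedralGroup 2, v^2 = 1 ∧ ∃ i : Fin 2, ∃ j : Fin 2, v = s^(i:ℕ)*t^(j:ℕ) := by decide

theorem card_sup_le' {G : Type*} [Group G] [Finite G] (N H : Subgroup G)
    (h : H ≤ normalizer (N : Set G)) : Nat.card (N ⊔ H : Subgroup G) ≤ Nat.card N * Nat.card H := by
  have e := coe_mul_of_right_le_normalizer_left N H h
  have := Set.natCard_mul_le (s := (N : Set G)) (t := (H : Set G))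
  rw [← e] at this
  exact this

theorem step_card {G : Type*} [Group G] [Finite G] (S : Set G) (g : G) (n : ℕ) (hn : 0 < n)
    (hg : g ^ n = 1) (h : ∀ s ∈ S, g * s * g⁻¹ ∈ closure S) :
    Nat.card (closure (insert g S)) ≤ Nat.card (closure S) * n := by
  have e : closure (insert g S) = closure S ⊔ zpowers g := by
    rw [Set.insert_eq, Subgroup.closure_union, zpowers_eq_closure, sup_comm]
  have h1 : closure S ≤ (closure S).comap (MulAut.conj g).toMonoidHom := by
    rw [closure_le]
    intro s hs
    simpa using h s hs
  have h2 : g ∈ normalizer (closure S : Set G) := by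
    rw [mem_normalizer_iff]
    have hmap : (closure S).map (MulAut.conj g).toMonoidHom = closure S := by
      apply eq_of_le_of_card_ge
      · rw [map_le_iff_le_comap]; exact h1
      · exact (Nat.card_congr ((closure S).equivMapOfInjective _
          (MulAut.conj g).injective).toEquiv).le
    intro k
    constructor
    · intro hk
      simpa using h1 hk
    · intro hk
      rw [← hmap] at hk
      obtain ⟨l, hl, hl2⟩ := hk
      have : l = k := by simpa using hl2
      exact this ▸ hl
  rw [e]
  refine (card_sup_le' _ _ (by simpa [zpowers_le] using h2)).trans ?_
  apply Nat.mul_le_mul_left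
  rw [Nat.card_zpowers]
  exact Nat.le_of_dvd hn (orderOf_dvd_of_pow_eq_one hg)

theorem small {G : Type*} [Group G] [Finite G] (a s t : G) (ha : a ^ 3 = 1) (hs : s ^ 2 = 1)
    (ht : t ^ 2 = 1) (hsa : s * a * s = a⁻¹) (hst : s * t = t * s)
    (hgen : ∀ H : Subgroup G, a ∈ H → s ∈ H → t ∈ H → H = ⊤)
    (h4 : (a * t) ^ 4 = 1) : Nat.card G ≤ 48 := by
  have t1 : t * t = 1 := by rw [← sq, ht]
  have ti : t⁻¹ = t := inv_eq_of_mul_eq_one_right t1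
  have s1 : s * s = 1 := by rw [← sq, hs]
  have si : s⁻¹ = s := inv_eq_of_mul_eq_one_right s1
  have t2 : ∀ g, t * (t * g) = g := fun g => by rw [← mul_assoc, t1, one_mul]
  have aa : a * a = a⁻¹ := by
    rw [eq_inv_iff_mul_eq_one, ← ha]; simp [pow_succ]
  have ai : a⁻¹ * a⁻¹ = a := by rw [← mul_inv_rev, aa, inv_inv]
  have aa2 : ∀ g, a * (a * g) = a⁻¹ * g := fun g => by rw [← mul_assoc, aa]
  have ai2 : ∀ g, a⁻¹ * (a⁻¹ * g) = a * g := fun g => by rw [← mul_assoc, ai]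
  obtain ⟨x, hx⟩ : ∃ x, x = a * t * a * t := ⟨_, rfl⟩
  obtain ⟨y, hy⟩ : ∃ y, y = t * a * t * a := ⟨_, rfl⟩
  have xx : x * x = 1 := by rw [← h4, hx]; simp only [pow_succ, pow_zero, one_mul, mul_assoc]
  have txt : t * x * t = y := by rw [hx, hy]; simp only [mul_assoc, t1, mul_one]
  have tyt : t * y * t = x := by rw [← txt]; simp only [mul_assoc, t1, mul_one, t2]
  have yy : y * y = 1 := by
    rw [← txt]
    have : t * x * t * (t * x * t) = t * (x * x) * t := by simp only [mul_assoc, t2]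
    rw [this, xx, mul_one, t1]
  have xi : x⁻¹ = x := inv_eq_of_mul_eq_one_right xx
  have yi : y⁻¹ = y := inv_eq_of_mul_eq_one_right yy
  have aya : a * y * a⁻¹ = x := by rw [hx, hy]; simp [mul_assoc]
  have axa' : a * x * a⁻¹ = (x * y)⁻¹ := by
    rw [hx, hy]; simp [mul_assoc, ti, aa2, t2]
  have comm : y * x = x * y := by
    have h : (a * x * a⁻¹) * (a * x * a⁻¹) = 1 := by
      have : (a * x * a⁻¹) * (a * x * a⁻¹) = a * (x * x) * a⁻¹ := by group
      rw [this, xx]; simp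
    rw [axa', ← mul_inv_rev, inv_eq_one] at h
    have h' := inv_eq_of_mul_eq_one_right h
    rw [mul_inv_rev, xi, yi] at h'
    exact h'
  have axa : a * x * a⁻¹ = x * y := by rw [axa', mul_inv_rev, xi, yi, comm]
  have sts : s * t * s⁻¹ = t := by rw [hst]; simp
  have sas : s * a * s⁻¹ = a⁻¹ := by rw [si, hsa]
  have sxs : s * x * s⁻¹ = y := by
    have : s * x * s⁻¹ = (s * a * s⁻¹) * (s * t * s⁻¹) * (s * a * s⁻¹) * (s * t * s⁻¹) := by
      rw [hx]; group
    rw [this, sts, sas, ← yi, hy]; simp [mul_assoc, ti]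
  have sys : s * y * s⁻¹ = x := by
    have : s * y * s⁻¹ = (s * t * s⁻¹) * (s * a * s⁻¹) * (s * t * s⁻¹) * (s * a * s⁻¹) := by
      rw [hy]; group
    rw [this, sts, sas, ← xi, hx]; simp [mul_assoc, ti]
  have tat : t * a * t⁻¹ = a⁻¹ * x := by rw [hx, ti]; simp [mul_assoc]
  have tst : t * s * t⁻¹ = s := by rw [← hst]; simp
  have c1 : Nat.card (closure ({x} : Set G)) ≤ 2 := by
    rw [← zpowers_eq_closure, Nat.card_zpowers]
    exact Nat.le_of_dvd two_pos (orderOf_dvd_of_pow_eq_one (by rw [sq, xx]))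
  have c2 := step_card {x} y 2 two_pos (by rw [sq, yy]) (by
    intro g hg
    rw [Set.mem_singleton_iff.mp hg, comm]
    simpa using subset_closure (Set.mem_singleton x))
  have c3 := step_card {y, x} a 3 (by norm_num) ha (by
    have mx : x ∈ closure ({y, x} : Set G) := subset_closure (by simp)
    have my : y ∈ closure ({y, x} : Set G) := subset_closure (by simp)
    rintro g (rfl | rfl)
    · rw [aya]; exact mx
    · rw [axa]; exact mul_mem mx my)
  have c4 := step_card {a, y, x} s 2 two_pos hs (by
    have mx : x ∈ closure ({a, y, x} : Set G) := subset_closure (by simp)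
    have my : y ∈ closure ({a, y, x} : Set G) := subset_closure (by simp)
    have ma : a ∈ closure ({a, y, x} : Set G) := subset_closure (by simp)
    intro g hg
    simp only [Set.mem_insert_iff, Set.mem_singleton_iff] at hg
    rcases hg with h | h | h <;> rw [h]
    · rw [sas]; exact inv_mem ma
    · rw [sys]; exact mx
    · rw [sxs]; exact my)
  have c5 := step_card {s, a, y, x} t 2 two_pos ht (by
    have mx : x ∈ closure ({s, a, y, x} : Set G) := subset_closure (by simp)
    have my : y ∈ closure ({s, a, y, x} : Set G) := subset_closure (by simp)
    have ma : a ∈ closure ({s, a, y, x} : Set G) := subset_closure (by simp)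
    have ms : s ∈ closure ({s, a, y, x} : Set G) := subset_closure (by simp)
    intro g hg
    simp only [Set.mem_insert_iff, Set.mem_singleton_iff] at hg
    rcases hg with h | h | h | h <;> rw [h]
    · rw [tst]; exact ms
    · rw [tat]; exact mul_mem (inv_mem ma) mx
    · rw [ti, tyt]; exact mx
    · rw [ti, txt]; exact my)
  rw [hgen (closure {t, s, a, y, x}) (subset_closure (by simp)) (subset_closure (by simp))
    (subset_closure (by simp)), card_top] at c5
  omega

theorem centr {G : Type*} [Group G] [Finite G] (K : Subgroup G) (hn : K.Normal)
    (hK : Nat.card K = 3) (a : G) (ha : a ^ 3 = 1) (k : G) (hk : k ∈ K) : Commute a k := by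
  have h3 : ∀ g ∈ K, g ^ 3 = 1 := fun g hg => by
    have := pow_card_eq_one' (x := (⟨g, hg⟩ : K))
    rw [hK] at this
    simpa using congrArg Subtype.val this
  classical
  by_cases k1 : k = 1
  · rw [k1]; exact Commute.one_right a
  have hz : zpowers k = K := by
    apply eq_of_le_of_card_ge (by simpa [zpowers_le] using hk)
    rw [hK, Nat.card_zpowers, orderOf_eq_prime (h3 k hk) k1]
  have hc : a * k * a⁻¹ ∈ zpowers k := hz ▸ hn.conj_mem k hk a
  have hfin : IsOfFinOrder k := isOfFinOrder_of_finite k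
  rw [← hfin.mem_powers_iff_mem_zpowers, hfin.mem_powers_iff_mem_range_orderOf,
    orderOf_eq_prime (h3 k hk) k1] at hc
  obtain ⟨i, hi, hik⟩ := Finset.mem_image.mp hc
  have hi : i < 3 := Finset.mem_range.mp hi
  change k ^ i = _ at hik
  interval_cases i
  · exfalso
    apply k1
    have : a * k * a⁻¹ = 1 := by rw [← hik, pow_zero]
    simpa using this
  · rw [pow_one] at hik
    change a * k = k * a
    rw [eq_mul_inv_iff_mul_eq] at hik
    exact hik.symm
  · exfalso
    have k3 := h3 k hk
    have e1 : a * k ^ 2 * a⁻¹ = k := by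
      have : a * k ^ 2 * a⁻¹ = (a * k * a⁻¹) ^ 2 := by rw [conj_pow]
      rw [this, ← hik, ← pow_mul, show 2 * 2 = 3 + 1 from rfl, pow_succ, k3, one_mul]
    have e2 : a ^ 3 * k * (a ^ 3)⁻¹ = k ^ 2 := by
      calc a ^ 3 * k * (a ^ 3)⁻¹ = a * (a * (a * k * a⁻¹) * a⁻¹) * a⁻¹ := by simp [pow_succ, mul_assoc]
        _ = k ^ 2 := by rw [← hik, e1, hik]
    rw [ha] at e2
    apply k1
    have : k * 1 = k * k := by simpa [sq] using e2
    exact (mul_left_cancel this).symm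

theorem core {G H : Type*} [Group G] [Finite G] [Group H] (f : G →* H) (a s t : G)
    (ha : a ^ 3 = 1) (hs : s ^ 2 = 1)
    (ht : t ^ 2 = 1) (hsa : s * a * s = a⁻¹) (hst : s * t = t * s)
    (hgen : ∀ H : Subgroup G, a ∈ H → s ∈ H → t ∈ H → H = ⊤)
    (hK : Nat.card f.ker = 3) (h4 : (f a * f t) ^ 4 = 1)
    (hw : f s * f t = (f a)⁻¹ * f t * f a * f t * (f a)⁻¹) : Nat.card G ≤ 48 := by
  apply small a s t ha hs ht hsa hst hgen
  have t1 : t * t = 1 := by rw [← sq, ht]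
  have ti : t⁻¹ = t := inv_eq_of_mul_eq_one_right t1
  have s1 : s * s = 1 := by rw [← sq, hs]
  have si : s⁻¹ = s := inv_eq_of_mul_eq_one_right s1
  obtain ⟨k, hk⟩ : ∃ k, k = (a * t) ^ 4 := ⟨_, rfl⟩
  rw [← hk]
  have kK : k ∈ f.ker := by rw [MonoidHom.mem_ker, hk]; simpa using h4
  have hn : f.ker.Normal := inferInstance
  have k3 : k ^ 3 = 1 := by
    have := pow_card_eq_one' (x := (⟨k, kK⟩ : f.ker))
    rw [hK] at this
    simpa using congrArg Subtype.val this
  have ca : Commute a k := centr _ hn hK a ha k kK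
  have cb : Commute (t * a * t⁻¹) k := centr _ hn hK _ (by rw [conj_pow, ha]; simp) k kK
  have cat : Commute (a * t) k := by rw [hk]; exact (Commute.refl _).pow_right 4
  have ct : Commute t k := by
    have := ca.inv_left.mul_left cat
    simpa using this
  obtain ⟨w, hwd⟩ : ∃ w, w = a⁻¹ * (t * a * t⁻¹) * a⁻¹ := ⟨_, rfl⟩
  have cw : Commute w k := hwd ▸ (ca.inv_left.mul_left cb).mul_left ca.inv_left
  have ckap : Commute (w⁻¹ * (s * t)) k := by
    have hm : w⁻¹ * (s * t) ∈ f.ker := by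
      rw [MonoidHom.mem_ker, map_mul, map_inv, map_mul, hw, hwd, ti]
      simp [mul_assoc]
    apply centr _ hn hK _ _ k kK
    have := pow_card_eq_one' (x := (⟨_, hm⟩ : f.ker))
    rw [hK] at this
    simpa using congrArg Subtype.val this
  have cst : Commute (s * t) k := by simpa using cw.mul_left ckap
  have cs : Commute s k := by
    have := cst.mul_left ct.inv_left
    simpa using this
  have sks : s * k * s⁻¹ = k := by rw [cs.eq]; simp
  have sks' : s * k * s⁻¹ = k⁻¹ := by
    have e : s * (a * t) * s⁻¹ = a⁻¹ * t := by
      calc s * (a * t) * s⁻¹ = (s * a * s) * (s⁻¹ * t * s⁻¹) := by group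
        _ = a⁻¹ * t := by rw [hsa, si, hst, mul_assoc, s1, mul_one]
    have e2 : a⁻¹ * t = t * (a * t)⁻¹ * t⁻¹ := by
      simp only [mul_inv_rev, ti, ← mul_assoc, t1, one_mul]
    rw [hk, ← conj_pow, e, e2, conj_pow, inv_pow, ← hk, ct.inv_right.eq]; simp
  rw [sks] at sks'
  have : k * k = 1 := by nth_rewrite 1 [sks']; simp
  calc k = k * (k * k) := by rw [this, mul_one]
    _ = k ^ 3 := by simp [pow_succ, mul_assoc]
    _ = 1 := k3

theorem ker_card {G : Type*} [Group G] [Finite G] (hG : Nat.card G = 72)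
    (f : G →* Perm (Fin 4)) (a s u : G) (ha : f a ^ 3 = 1) (ha1 : f a ≠ 1)
    (hsg : Perm.sign (f s) = -1) (hu : f u ^ 4 = 1) (hu2 : f u ^ 2 ≠ 1) :
    Nat.card f.ker = 3 := by
  have hc : Nat.card (Perm (Fin 4)) = 24 := by
    rw [Nat.card_eq_fintype_card, Fintype.card_perm]; rfl
  have h3 : 3 ∣ Nat.card f.range := by
    rw [← orderOf_eq_prime ha ha1]
    exact Subgroup.orderOf_dvd_natCard f.range ⟨a, rfl⟩
  have h4 : 4 ∣ Nat.card f.range := by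
    have : orderOf (f u) = 2 ^ (1 + 1) := orderOf_eq_prime_pow (by simpa using hu2) (by simpa using hu)
    have h := Subgroup.orderOf_dvd_natCard f.range ⟨u, rfl⟩
    rw [this] at h
    exact h
  have h12 : 12 ∣ Nat.card f.range := by omega
  have hi := f.range.index_mul_card
  rw [hc] at hi
  obtain ⟨m, hm⟩ := h12
  have hne : f.range.index ≠ 2 := by
    intro h
    have := Perm.eq_alternatingGroup_of_index_eq_two h
    have hs : f s ∈ f.range := ⟨s, rfl⟩
    rw [this, Perm.mem_alternatingGroup, hsg] at hs
    exact absurd hs (by decide)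
  have him : f.range.index * m = 2 := by rw [hm] at hi; nlinarith
  have hid : f.range.index ∣ 2 := ⟨m, him.symm⟩
  have h1 : f.range.index = 1 := by
    rcases (Nat.dvd_prime Nat.prime_two).mp hid with h | h
    · exact h
    · exact absurd h hne
  rw [h1] at hi
  have := f.ker.index_mul_card
  rw [index_ker, hG] at this
  nlinarith

theorem main_aux {G : Type*} [Group G] [Finite G] (hG : Nat.card G = 72) (a s t : G)
    (V : Subgroup G) (hVc : Nat.card V = 4) (hsV : s ∈ V) (htV : t ∈ V) (hV2 : ∀ v ∈ V, v ^ 2 = 1)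
    (ha : a ^ 3 = 1) (hs : s ^ 2 = 1)
    (ht : t ^ 2 = 1) (hsa : s * a * s = a⁻¹) (hst : s * t = t * s)
    (hgen : ∀ H : Subgroup G, a ∈ H → s ∈ H → t ∈ H → H = ⊤) : False := by
  haveI : Fact (Nat.Prime 3) := ⟨Nat.prime_three⟩
  obtain ⟨P⟩ : Nonempty (Sylow 3 G) := inferInstance
  have hPc : Nat.card P = 9 := by
    rw [P.card_eq_multiplicity, hG, show (72 : ℕ) = 3 ^ 2 * 8 by norm_num,
      Nat.factorization_mul (by norm_num) (by norm_num), Nat.factorization_pow]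
    simp [Nat.prime_three.factorization_self,
      Nat.factorization_eq_zero_of_not_dvd (show ¬ 3 ∣ 8 by norm_num)]
  have hPi : P.index = 8 := by
    have := (P : Subgroup G).index_mul_card
    rw [hG, show Nat.card (P : Subgroup G) = 9 from hPc] at this
    omega
  -- The Sylow subgroup is not normal
  have hnn : ¬ (P : Subgroup G).Normal := by
    intro hn
    have haP : a ∈ (P : Subgroup G) := by
      have hp : IsPGroup 3 (zpowers a) := by
        apply IsPGroup.of_card_dvd_pow (n := 1)
        rw [Nat.card_zpowers]
        exact orderOf_dvd_of_pow_eq_one (by simpa using ha)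
      have hle : zpowers a ≤ normalizer (P : Set G) := by
        have : normalizer ((P : Subgroup G) : Set G) = ⊤ := normalizer_eq_top_iff.mpr hn
        rw [show (P : Set G) = ((P : Subgroup G) : Set G) from rfl, this]
        exact le_top
      have h := hp.inf_normalizer_sylow P
      rw [inf_of_le_left hle] at h
      have : a ∈ zpowers a ⊓ (P : Subgroup G) := h ▸ mem_zpowers a
      exact this.2
    have hle := card_sup_le' (P : Subgroup G) V le_normalizer_of_normal
    rw [hgen ((P : Subgroup G) ⊔ V) (mem_sup_left haP) (mem_sup_right hsV) (mem_sup_right htV),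
      card_top, hG, hVc, show Nat.card (P : Subgroup G) = 9 from hPc] at hle
    omega
  have hn1 : Nat.card (Sylow 3 G) ≠ 1 := by
    intro h
    have := (Nat.card_eq_one_iff_unique.mp h).1
    exact hnn P.normal_of_subsingleton
  have hn4 : Nat.card (Sylow 3 G) = 4 := by
    have h1 := card_sylow_modEq_one 3 G
    have h2 := P.card_dvd_index
    rw [hPi] at h2
    have h3 := Nat.le_of_dvd (by norm_num) h2
    unfold Nat.ModEq at h1
    interval_cases Nat.card (Sylow 3 G) <;> omega
  have e : Sylow 3 G ≃ Fin 4 := hn4 ▸ Finite.equivFin (Sylow 3 G)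
  obtain ⟨f, hf⟩ : ∃ f : G →* Perm (Fin 4), ∀ g Q, f g (e Q) = e (g • Q) :=
    ⟨e.permCongrHom.toMonoidHom.comp (MulAction.toPermHom G (Sylow 3 G)), fun g Q => by
      simp [Equiv.permCongrHom]⟩
  have hfa : f a ≠ 1 := by
    intro h
    have hr : V ⊔ f.ker = ⊤ := hgen _ (mem_sup_right h) (mem_sup_left hsV) (mem_sup_left htV)
    have hPk : (P : Subgroup G) ≤ f.ker := by
      intro p hp
      have hp9 : p ^ 9 = 1 := by
        have := pow_card_eq_one' (x := (⟨p, hp⟩ : (P : Subgroup G)))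
        rw [show Nat.card (P : Subgroup G) = 9 from hPc] at this
        simpa using congrArg Subtype.val this
      have hpm : p ∈ V ⊔ f.ker := hr ▸ mem_top p
      rw [mem_sup_of_normal_right] at hpm
      obtain ⟨v, hv, k, hk, rfl⟩ := hpm
      rw [MonoidHom.mem_ker] at hk ⊢
      have h2 : f (v * k) ^ 2 = 1 := by
        rw [map_mul, hk, mul_one, ← map_pow, hV2 v hv, map_one]
      have h9 : f (v * k) ^ 9 = 1 := by rw [← map_pow, hp9, map_one]
      rw [show 9 = 2 * 4 + 1 from rfl, pow_succ, pow_mul, h2, one_pow, one_mul] at h9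
      exact h9
    have htop := P.normalizer_sup_eq_top' hPk
    have hkn : f.ker ≤ normalizer (P : Set G) := by
      intro g hg
      rw [← Sylow.smul_eq_iff_mem_normalizer]
      apply e.injective
      rw [← hf, MonoidHom.mem_ker.mp hg]; rfl
    rw [sup_of_le_left hkn] at htop
    exact hnn (normalizer_eq_top_iff.mp htop)
  have htr : ∀ i, ¬ (f a i = i ∧ f s i = i ∧ f t i = i) := by
    rintro i ⟨h1, h2, h3⟩
    obtain ⟨Q, rfl⟩ := e.surjective i
    rw [hf, e.apply_eq_iff_eq] at h1 h2 h3
    have := hgen (MulAction.stabilizer G Q) h1 h2 h3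
    apply hn1
    rw [Nat.card_eq_one_iff_unique]
    refine ⟨⟨fun A B => ?_⟩, ⟨Q⟩⟩
    have key : ∀ A : Sylow 3 G, A = Q := fun A => by
      obtain ⟨g, hg⟩ := MulAction.exists_smul_eq G Q A
      have hgm : g ∈ MulAction.stabilizer G Q := this ▸ mem_top g
      rw [← hg]; exact hgm
    rw [key A, key B]
  have fa3 : f a ^ 3 = 1 := by rw [← map_pow, ha, map_one]
  obtain ⟨hsg, h | h⟩ := perm_fact (f a) fa3 hfa (f s)
    (by rw [← map_pow, hs, map_one]) (by rw [← map_mul, ← map_mul, hsa, map_inv]) (f t)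
    (by rw [← map_pow, ht, map_one]) (by rw [← map_mul, hst, map_mul]) htr
  · obtain ⟨h4, h2, hw⟩ := h
    have hK := ker_card hG f a s (a * t) fa3 hfa hsg (by simpa using h4) (by simpa using h2)
    have := core f a s t ha hs ht hsa hst hgen hK h4 hw
    omega
  · obtain ⟨h4, h2, hw⟩ := h
    rw [← map_mul f s t] at h4 h2 hw
    have hK := ker_card hG f a s (a * (s * t)) fa3 hfa hsg (by simpa using h4) (by simpa using h2)
    have := core f a s (s * t) ha hs (hV2 _ (mul_mem hsV htV)) hsa
      (by rw [mul_assoc, ← hst]) (fun H h1 h2 h3 => hgen H h1 h2 (by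
        have := mul_mem (inv_mem h2) h3
        simpa using this)) hK h4 hw
    omega

theorem no_order_72_gen_by_D3_D2 (G : Type*) [Group G] [Finite G]
    (hG : Nat.card G = 72) (U V : Subgroup G)
    (hU : Nonempty (U ≃* DihedralGroup 3))
    (hV : Nonempty (V ≃* DihedralGroup 2))
    (hUV : Nonempty ((↥(U ⊓ V)) ≃* Multiplicative (ZMod 2))) :
    U ⊔ V ≠ ⊤ := by
  intro htop
  obtain ⟨eU⟩ := hU
  obtain ⟨eV⟩ := hV
  obtain ⟨eW⟩ := hUV
  obtain ⟨z, hz, hz2⟩ : ∃ z : Multiplicative (ZMod 2), z ≠ 1 ∧ z ^ 2 = 1 :=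
    ⟨Multiplicative.ofAdd 1, by decide, by decide⟩
  obtain ⟨w, hw⟩ := (⟨eW.symm z, rfl⟩ : ∃ w, w = eW.symm z)
  have hw1 : w ≠ 1 := by rw [hw]; simpa using hz
  have hw2 : w ^ 2 = 1 := by rw [hw, ← map_pow, hz2, map_one]
  obtain ⟨s, hsU, hsV⟩ := w
  have hs1 : s ≠ 1 := fun h => hw1 (Subtype.ext h)
  have hs2 : s ^ 2 = 1 := congrArg Subtype.val hw2
  -- the subgroup U
  obtain ⟨hU1, hU2⟩ := d3a (eU ⟨s, hsU⟩)
    (fun h => hs1 (congrArg Subtype.val ((map_eq_one_iff eU eU.injective).mp h)))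
    (by rw [← map_pow, show (⟨s, hsU⟩ : U) ^ 2 = 1 from Subtype.ext hs2, map_one])
  obtain ⟨a, haeq⟩ : ∃ a : U, eU a = .r 1 := eU.surjective _
  rw [← haeq] at hU1 hU2
  have ha3 : a ^ 3 = 1 := by
    apply eU.injective
    rw [map_pow, haeq, map_one]; decide
  have hsa : (⟨s, hsU⟩ : U) * a * ⟨s, hsU⟩ = a⁻¹ := by
    apply eU.injective
    rw [map_mul, map_mul, hU1, map_inv]
  -- the subgroup V
  obtain ⟨t', ht2, hst, hVall⟩ := d2a (eV ⟨s, hsV⟩)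
    (fun h => hs1 (congrArg Subtype.val ((map_eq_one_iff eV eV.injective).mp h)))
  obtain ⟨t, rfl⟩ := eV.surjective t'
  refine main_aux hG (a : G) s (t : G) V ?_ hsV t.2 ?_ (congrArg Subtype.val ha3) hs2 ?_
    (congrArg Subtype.val hsa) ?_ ?_
  · rw [Nat.card_congr eV.toEquiv, DihedralGroup.nat_card]
  · intro v hv
    have h := (hVall (eV ⟨v, hv⟩)).1
    rw [← map_pow, map_eq_one_iff eV eV.injective] at h
    exact congrArg Subtype.val h
  · rw [← map_pow, map_eq_one_iff eV eV.injective] at ht2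
    exact congrArg Subtype.val ht2
  · rw [← map_mul, ← map_mul] at hst
    exact congrArg Subtype.val (eV.injective hst)
  · intro H h1 h2 h3
    rw [eq_top_iff, ← htop, sup_le_iff]
    constructor
    · intro u hu
      obtain ⟨i, j, hij⟩ := hU2 (eU ⟨u, hu⟩)
      rw [← map_pow, ← map_pow, ← map_mul] at hij
      have h := congrArg Subtype.val (eU.injective hij)
      rw [show u = (a : G) ^ (i : ℕ) * s ^ (j : ℕ) from h]
      exact mul_mem (pow_mem h1 _) (pow_mem h2 _)
    · intro v hv
      obtain ⟨i, j, hij⟩ := (hVall (eV ⟨v, hv⟩)).2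
      rw [← map_pow, ← map_pow, ← map_mul] at hij
      have h := congrArg Subtype.val (eV.injective hij)
      rw [show v = s ^ (i : ℕ) * (t : G) ^ (j : ℕ) from h]
      exact mul_mem (pow_mem h2 _) (pow_mem h3 _)
end

section
/- There is no finite group G of order 72 containing subgroups U ≅ D3 and V ≅ A4 with U ∩ V ≅ Z/3Z such that U and V generate G. -/
abbrev A4x := alternatingGroup (Fin 4)

set_option maxRecDepth 100000 in
set_option maxHeartbeats 4000000 in
theorem A4x_inv : ∀ v c : A4x, v * c * v⁻¹ = c⁻¹ → c ^ 3 = 1 → c = 1 := by decide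

set_option maxRecDepth 100000 in
set_option maxHeartbeats 4000000 in
theorem A4x_K_mul : ∀ a b : A4x, a ^ 2 = 1 → b ^ 2 = 1 → (a * b) ^ 2 = 1 := by decide

set_option maxRecDepth 100000 in
set_option maxHeartbeats 4000000 in
theorem A4x_comm : ∀ w k : A4x, w ≠ 1 → k ^ 2 = 1 → k = w ∨ ∃ a, k = a * w * a⁻¹ * w⁻¹ := by
  decide

set_option maxRecDepth 100000 in
set_option maxHeartbeats 4000000 in
theorem A4x_sq : ∀ v : A4x, ∃ a b : A4x, v = a ^ 2 * b ^ 2 := by decide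

set_option maxRecDepth 100000 in
set_option maxHeartbeats 4000000 in
theorem A4x_cub : ∀ c : A4x, c ^ 3 = 1 → c ≠ 1 →
    ∃ v : A4x, (c⁻¹ * (v * c * v⁻¹)) ^ 2 = 1 ∧ c⁻¹ * (v * c * v⁻¹) ≠ 1 := by decide

set_option maxRecDepth 100000 in
set_option maxHeartbeats 4000000 in
theorem A4x_gen : ∀ c v : A4x, c ^ 3 = 1 → c ≠ 1 →
    v ^ 2 = 1 ∨ (c * v) ^ 2 = 1 ∨ (c ^ 2 * v) ^ 2 = 1 := by decide

theorem D3x_inv : ∀ c : DihedralGroup 3, c ^ 3 = 1 → c ≠ 1 → ∃ t, t * c * t⁻¹ = c⁻¹ := by decide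

def A4xK : Subgroup A4x where
  carrier := {x | x ^ 2 = 1}
  mul_mem' := fun {a b} ha hb => A4x_K_mul a b ha hb
  one_mem' := one_pow 2
  inv_mem' := fun {a} (ha : a ^ 2 = 1) => by
    change a⁻¹ ^ 2 = 1
    rw [inv_pow, ha, inv_one]

set_option maxRecDepth 100000 in
set_option maxHeartbeats 4000000 in
theorem A4xK_card : Nat.card A4xK = 4 := by
  have h : Nat.card A4xK = Nat.card {x : A4x // x ^ 2 = 1} := rfl
  rw [h, Nat.card_eq_fintype_card]
  decide

theorem A4x_card : Nat.card A4x = 12 := by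
  rw [Nat.card_eq_fintype_card]; decide

theorem subgroup_pow_cardx {G : Type*} [Group G] {H : Subgroup G} {x : G} (hx : x ∈ H) :
    x ^ Nat.card H = 1 := by
  have h : (⟨x, hx⟩ : H) ^ Nat.card H = 1 := pow_card_eq_one'
  exact congrArg Subtype.val h

open scoped Pointwise in
theorem aux72 (G : Type*) [Group G] [Finite G] (hG : Nat.card G = 72)
    (f : A4x →* G) (hf : Function.Injective f) (c : A4x) (hc3 : c ^ 3 = 1) (hc1 : c ≠ 1)
    (t : G) (ht : t * f c * t⁻¹ = (f c)⁻¹) (U : Subgroup G) (hU : Nat.card U = 6)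
    (hcU : f c ∈ U) (hgen : U ⊔ f.range = ⊤) : False := by
  have : Fact (Nat.Prime 3) := ⟨by norm_num⟩
  have P : Sylow 3 G := default
  have hP : Nat.card P = 9 := by
    rw [P.card_eq_multiplicity, hG]
    have : (72 : ℕ).factorization 3 = 2 := by
      rw [show (72 : ℕ) = 3 ^ 2 * 8 by norm_num, Nat.factorization_mul (by norm_num) (by norm_num),
        Nat.Prime.factorization_pow (by norm_num)]
      simp [Nat.factorization_eq_zero_of_not_dvd (show ¬ 3 ∣ 8 by norm_num)]
    rw [this]; norm_num
  have hPi : (P : Subgroup G).index = 8 := by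
    have h1 := (P : Subgroup G).card_mul_index
    have h2 : Nat.card (P : Subgroup G) = 9 := hP
    rw [h2, hG] at h1
    omega
  have hS : Nat.card (Sylow 3 G) = 4 := by
    have h1 := P.card_dvd_index
    rw [hPi] at h1
    have h2 := card_sylow_modEq_one 3 G
    have h3 : Nat.card (Sylow 3 G) ≠ 1 := by
      intro h
      have hs : Subsingleton (Sylow 3 G) := (Nat.card_eq_one_iff_unique.mp h).1
      have hn : (P : Subgroup G).Normal := Sylow.normal_of_subsingleton P
      have hcp : f c ∈ (P : Subgroup G) := by
        have : IsPGroup 3 (Subgroup.zpowers (f c)) := by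
          apply IsPGroup.of_card (n := 1)
          rw [Nat.card_zpowers, pow_one]
          apply orderOf_eq_prime
          · rw [← map_pow, hc3, map_one]
          · intro h; exact hc1 (hf (by rw [h, map_one]))
        obtain ⟨Q, hQ⟩ := this.exists_le_sylow
        rw [Subsingleton.elim P Q]
        exact hQ (Subgroup.mem_zpowers _)
      obtain ⟨v, hv, hv1⟩ := A4x_cub c hc3 hc1
      have hm : f (c⁻¹ * (v * c * v⁻¹)) ∈ (P : Subgroup G) := by
        simp only [map_mul, map_inv]
        exact mul_mem (inv_mem hcp) (hn.conj_mem _ hcp _)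
      have h2 : f (c⁻¹ * (v * c * v⁻¹)) ^ 2 = 1 := by rw [← map_pow, hv, map_one]
      have h9 : f (c⁻¹ * (v * c * v⁻¹)) ^ 9 = 1 := by
        have := subgroup_pow_cardx (H := (P : Subgroup G)) hm
        rwa [show Nat.card (P : Subgroup G) = 9 from hP] at this
      apply hv1
      apply hf
      rw [map_one]
      generalize f (c⁻¹ * (v * c * v⁻¹)) = x at *
      calc x = x ^ 9 * ((x ^ 2) ^ 4)⁻¹ := by group
        _ = 1 := by rw [h9, h2]; simp
    have h4 : Nat.card (Sylow 3 G) ≤ 8 := Nat.le_of_dvd (by norm_num) h1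
    generalize Nat.card (Sylow 3 G) = n at *
    interval_cases n <;> simp_all [Nat.ModEq]
  let φ : G →* Equiv.Perm (Sylow 3 G) := MulAction.toPermHom G (Sylow 3 G)
  have hRM : Nat.card φ.ker * Nat.card φ.range = 72 := by
    rw [← hG, ← Subgroup.card_mul_index φ.ker, Subgroup.index_ker]
  have hR24 : Nat.card φ.range ∣ 24 := by
    have := Subgroup.card_subgroup_dvd_card φ.range
    rwa [Nat.card_perm, hS] at this
  have hR4 : 4 ∣ Nat.card φ.range := by
    have h1 : φ.ker ≤ MulAction.stabilizer G P := by
      intro g hg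
      have : φ g P = P := by rw [MonoidHom.mem_ker.mp hg]; rfl
      exact this
    have h2 := Subgroup.index_dvd_of_le h1
    rw [Subgroup.index_ker, MulAction.index_stabilizer_of_transitive, hS] at h2
    exact h2
  have hM4 : ¬ 4 ∣ Nat.card φ.ker := by
    intro h
    have h16 : 4 * 4 ∣ 72 := hRM ▸ mul_dvd_mul h hR4
    norm_num at h16
  have hinj : ∀ w : A4x, f w ∈ φ.ker → w = 1 := by
    intro w hw
    by_contra hw1
    apply hM4
    have hle : A4xK.map f ≤ φ.ker := by
      rintro _ ⟨k, hk, rfl⟩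
      rcases A4x_comm w k hw1 hk with rfl | ⟨a, rfl⟩
      · exact hw
      · simp only [map_mul, map_inv]
        exact mul_mem (φ.normal_ker.conj_mem _ hw _) (inv_mem hw)
    have := Subgroup.card_dvd_of_le hle
    rwa [Subgroup.card_map_of_injective hf, A4xK_card] at this
  have hinj' : Function.Injective (φ.comp f) := by
    rw [injective_iff_map_eq_one]
    intro w hw
    exact hinj w hw
  have hcardr : Nat.card (φ.comp f).range = 12 := by
    rw [← A4x_card]
    exact (Nat.card_congr (MonoidHom.ofInjective hinj').toEquiv).symm
  have hler : (φ.comp f).range ≤ φ.range := by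
    rintro _ ⟨x, rfl⟩; exact ⟨f x, rfl⟩
  have hR12 : Nat.card φ.range ≠ 12 := by
    intro h
    have he : (φ.comp f).range = φ.range :=
      Subgroup.eq_of_le_of_card_ge hler (by rw [h, hcardr])
    have : φ t ∈ (φ.comp f).range := by rw [he]; exact ⟨t, rfl⟩
    obtain ⟨v, hv⟩ := this
    apply hc1
    apply A4x_inv v c _ hc3
    apply hinj'
    have h2 := congrArg φ ht
    simp only [map_mul, map_inv] at h2 ⊢
    rw [hv]
    exact h2
  have hM3 : Nat.card φ.ker = 3 := by
    have h12 : 12 ∣ Nat.card φ.range := by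
      rw [← hcardr]; exact Subgroup.card_dvd_of_le hler
    have : Nat.card φ.range = 24 := by
      have := Nat.le_of_dvd (by norm_num) hR24
      have : 0 < Nat.card φ.range := Nat.card_pos
      omega
    rw [this] at hRM
    omega
  set M := φ.ker with hM
  have hMn : M.Normal := φ.normal_ker
  have hm3 : ∀ m ∈ M, m ^ 3 = 1 := by
    intro m hm
    have := subgroup_pow_cardx hm
    rwa [hM3] at this
  -- conjugation on M
  have hconj : ∀ g : G, ∀ m ∈ M, g ^ 2 * m = m * g ^ 2 := by
    intro g m hm
    by_cases h1 : m = 1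
    · simp [h1]
    have hz : Subgroup.zpowers m = M := by
      apply Subgroup.eq_of_le_of_card_ge
      · simpa using hm
      · rw [Nat.card_zpowers, hM3, orderOf_eq_prime (hm3 m hm) h1]
    have h2 : g * m * g⁻¹ ∈ Subgroup.zpowers m := by rw [hz]; exact hMn.conj_mem _ hm _
    obtain ⟨i, hi⟩ := h2
    have hi : m ^ i = g * m * g⁻¹ := hi
    have h3 : g ^ 2 * m * (g ^ 2)⁻¹ = m ^ (i * i) := by
      calc g ^ 2 * m * (g ^ 2)⁻¹ = g * (g * m * g⁻¹) * g⁻¹ := by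
            simp only [pow_two, mul_inv_rev, mul_assoc]
        _ = g * m ^ i * g⁻¹ := by rw [hi]
        _ = (g * m * g⁻¹) ^ i := by rw [conj_zpow]
        _ = m ^ (i * i) := by rw [← hi, zpow_mul]
    have h4 : m ^ (i * i) = m := by
      have h5 : ¬ (3 : ℤ) ∣ i := by
        rintro ⟨j, rfl⟩
        rw [zpow_mul] at hi
        have : m ^ (3 : ℤ) = 1 := by exact_mod_cast hm3 m hm
        rw [this, one_zpow] at hi
        apply h1
        have := hi.symm
        simpa using this
      have h6 : (3 : ℤ) ∣ i * i - 1 := by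
        have : i % 3 = 1 ∨ i % 3 = 2 := by omega
        apply Int.dvd_of_emod_eq_zero
        rcases this with h | h <;> simp [Int.sub_emod, Int.mul_emod, h]
      obtain ⟨j, hj⟩ := h6
      have : i * i = 3 * j + 1 := by omega
      rw [this, zpow_add, zpow_mul]
      have : m ^ (3 : ℤ) = 1 := by exact_mod_cast hm3 m hm
      rw [this]; simp
    rw [h4] at h3
    exact mul_inv_eq_iff_eq_mul.mp h3
  have hcomm : ∀ v : A4x, ∀ m ∈ M, f v * m = m * f v := by
    intro v m hm
    obtain ⟨a, b, rfl⟩ := A4x_sq v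
    rw [map_mul, map_pow, map_pow, mul_assoc, hconj _ m hm, ← mul_assoc, hconj _ m hm, mul_assoc]
  -- N = M V has index two
  have hdisj : Disjoint M f.range := by
    rw [Subgroup.disjoint_def]
    rintro _ hx ⟨w, rfl⟩
    rw [hinj w hx, map_one]
  have hVcard : Nat.card f.range = 12 := by
    rw [← A4x_card]
    exact (Nat.card_congr (MonoidHom.ofInjective hf).toEquiv).symm
  have hNcard : 36 ∣ Nat.card (M ⊔ f.range : Subgroup G) := by
    have hinj2 : Function.Injective (fun p : M × f.range => ((p.1 : G) * (p.2 : G))) :=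
      Subgroup.mul_injective_of_disjoint hdisj
    have : Nat.card (M ⊔ f.range : Subgroup G) = 36 := by
      rw [← SetLike.coe_sort_coe, Subgroup.normal_mul]
      have : (M : Set G) * (f.range : Set G) = Set.range (fun p : M × f.range => ((p.1 : G) * (p.2 : G))) := by
        ext x
        simp [Set.mem_mul]
      rw [this, Nat.card_range_of_injective hinj2, Nat.card_prod, hM3, hVcard]
    rw [this]
  have hNn : (M ⊔ f.range : Subgroup G).Normal := by
    have h1 := (M ⊔ f.range : Subgroup G).card_mul_index
    rw [hG] at h1
    obtain ⟨k, hk⟩ := hNcard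
    rw [hk] at h1
    have h2 : k * (M ⊔ f.range : Subgroup G).index = 2 := by
      rw [mul_assoc] at h1; omega
    have h3 : (M ⊔ f.range : Subgroup G).index ∣ 2 := Dvd.intro_left _ h2
    rcases (Nat.dvd_prime Nat.prime_two).mp h3 with h | h
    · rw [Subgroup.index_eq_one.mp h]; infer_instance
    · exact Subgroup.normal_of_index_eq_two h
  have hKn : (A4xK.map f).Normal := by
    constructor
    rintro _ ⟨k, hk, rfl⟩ g
    have hk2 : k ^ 2 = 1 := hk
    have hmem : g * f k * g⁻¹ ∈ M ⊔ f.range :=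
      hNn.conj_mem _ (le_sup_right (a := M) ⟨k, rfl⟩) _
    rw [← SetLike.mem_coe, Subgroup.normal_mul] at hmem
    obtain ⟨m, hm, _, ⟨v, rfl⟩, hmv⟩ := hmem
    have hm : m ∈ M := hm
    have hmv : m * f v = g * f k * g⁻¹ := hmv
    have hsq : m ^ 2 * f (v ^ 2) = 1 := by
      calc m ^ 2 * f (v ^ 2) = m * (m * f v) * f v := by
            rw [map_pow]; simp only [pow_two, mul_assoc]
        _ = (m * f v) ^ 2 := by
            nth_rewrite 1 [← hcomm v m hm]
            simp only [pow_two, mul_assoc]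
        _ = g * f (k ^ 2) * g⁻¹ := by rw [hmv, conj_pow, map_pow]
        _ = 1 := by rw [hk2]; simp
    have hv : v ^ 2 = 1 := by
      apply hinj
      rw [eq_inv_of_mul_eq_one_right hsq]
      exact inv_mem (pow_mem hm 2)
    have hm1 : m = 1 := by
      rw [hv, map_one, mul_one] at hsq
      have := hm3 m hm
      rw [pow_succ, hsq, one_mul] at this
      exact this
    rw [← hmv, hm1, one_mul]
    exact ⟨v, hv, rfl⟩
  have htop : U ⊔ A4xK.map f = ⊤ := by
    rw [eq_top_iff, ← hgen]
    refine sup_le le_sup_left ?_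
    rintro _ ⟨v, rfl⟩
    have hc' : f c ∈ U ⊔ A4xK.map f := le_sup_left (a := U) hcU
    have hk : ∀ k : A4x, k ^ 2 = 1 → f k ∈ U ⊔ A4xK.map f := fun k hk =>
      le_sup_right (a := U) ⟨k, hk, rfl⟩
    rcases A4x_gen c v hc3 hc1 with h | h | h
    · exact hk _ h
    · have := hk _ h
      rw [map_mul] at this
      exact (Subgroup.mul_mem_cancel_left _ hc').mp this
    · have := hk _ h
      rw [map_mul, map_pow] at this
      exact (Subgroup.mul_mem_cancel_left _ (pow_mem hc' 2)).mp this
  have hle : Nat.card (U ⊔ A4xK.map f : Subgroup G) ≤ 6 * 4 := by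
    rw [← SetLike.coe_sort_coe, Subgroup.mul_normal]
    refine (Set.natCard_mul_le).trans ?_
    have h1 : Nat.card (U : Set G) = 6 := hU
    have h2 : Nat.card (A4xK.map f : Set G) = 4 := by
      exact (Subgroup.card_map_of_injective hf).trans A4xK_card
    rw [h1, h2]
  rw [htop, Subgroup.card_top, hG] at hle
  omega

theorem no_order_72_gen_by_D3_A4 (G : Type*) [Group G] [Finite G]
    (hG : Nat.card G = 72) (U V : Subgroup G)
    (hU : Nonempty (U ≃* DihedralGroup 3))
    (hV : Nonempty (V ≃* alternatingGroup (Fin 4)))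
    (hUV : Nonempty ((↥(U ⊓ V)) ≃* Multiplicative (ZMod 3))) :
    U ⊔ V ≠ ⊤ := by
  intro hgen
  obtain ⟨eU⟩ := hU
  obtain ⟨eV⟩ := hV
  obtain ⟨eW⟩ := hUV
  obtain ⟨y, hy3, hy1⟩ : ∃ y : Multiplicative (ZMod 3), y ^ 3 = 1 ∧ y ≠ 1 := by decide
  obtain ⟨x, hx⟩ : ∃ x, x = eW.symm y := ⟨_, rfl⟩
  have hx3 : x ^ 3 = 1 := by rw [hx, ← map_pow, hy3, map_one]
  have hx1 : x ≠ 1 := by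
    rw [hx]; intro h; exact hy1 (by simpa using h)
  have hxG3 : (x : G) ^ 3 = 1 := by exact_mod_cast congrArg Subtype.val hx3
  have hxG1 : (x : G) ≠ 1 := fun h => hx1 (Subtype.ext h)
  have hxU : (x : G) ∈ U := x.2.1
  have hxV : (x : G) ∈ V := x.2.2
  obtain ⟨t, ht⟩ := D3x_inv (eU ⟨x, hxU⟩)
    (by rw [← map_pow, show (⟨x, hxU⟩ : U) ^ 3 = 1 from Subtype.ext hxG3, map_one])
    (by
      intro h
      rw [map_eq_one_iff eU eU.injective] at h
      exact hxG1 (congrArg Subtype.val h))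
  have hfc : (V.subtype.comp eV.symm.toMonoidHom) (eV ⟨x, hxV⟩) = (x : G) := by simp
  refine aux72 G hG (V.subtype.comp eV.symm.toMonoidHom) ?_ (eV ⟨x, hxV⟩) ?_ ?_
    (eU.symm t : U) ?_ U ?_ ?_ ?_
  · exact V.subtype_injective.comp eV.symm.injective
  · rw [← map_pow, show (⟨x, hxV⟩ : V) ^ 3 = 1 from Subtype.ext hxG3, map_one]
  · intro h
    rw [map_eq_one_iff eV eV.injective] at h
    exact hxG1 (congrArg Subtype.val h)
  · rw [hfc]
    have h := congrArg (fun z => ((eU.symm z : U) : G)) ht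
    simpa using h
  · rw [Nat.card_congr eU.toEquiv, DihedralGroup.nat_card]
  · rw [hfc]; exact hxU
  · have : (V.subtype.comp eV.symm.toMonoidHom).range = V := by
      ext g
      constructor
      · rintro ⟨a, rfl⟩
        exact (eV.symm a).2
      · intro hg
        exact ⟨eV ⟨g, hg⟩, by simp⟩
    rw [this, hgen]
end

section
/- If G is a finite group of order 48 containing subgroups U ≅ D3 and V ≅ D2 with U ∩ V ≅ Z/2Z generating G, then G ≅ S4 × Z/2Z. -/
/-- The relations satisfied by the generators `a`, `x`, `c`. -/
structure Rels {Q : Type*} [Group Q] (a x c : Q) : Prop where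
  aa : a * a = 1
  xx : x ^ 3 = 1
  axa : a * x = x ^ 2 * a
  cc : c * c = 1
  ac : a * c = c * a
  comm : c * (x * c * x⁻¹) = (x * c * x⁻¹) * c

def wordOf {Q : Type*} [Group Q] (a x c : Q) (i j k l m : ℕ) : Q :=
  c ^ i * (x * c * x⁻¹) ^ j * (x ^ 2 * c * (x ^ 2)⁻¹) ^ k * x ^ l * a ^ m

theorem pow_mod_of {Q : Type*} [Group Q] {g : Q} {n : ℕ} (h : g ^ n = 1) (k : ℕ) :
    g ^ k = g ^ (k % n) := by
  conv_lhs => rw [← Nat.mod_add_div k n, pow_add, pow_mul, h, one_pow, mul_one]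

theorem Rels.mul_word {Q : Type*} [Group Q] {a x c : Q} (h : Rels a x c) (i j k l m : ℕ) :
    c * wordOf a x c i j k l m = wordOf a x c (i + 1) j k l m ∧
    x * wordOf a x c i j k l m = wordOf a x c k i j (l + 1) m ∧
    a * wordOf a x c i j k l m = wordOf a x c i k j (2 * l) (m + 1) := by
  obtain ⟨aa, xx, axa, cc, ac, comm⟩ := h
  have x3 : x * x * x = 1 := by rw [← xx]; simp only [pow_succ, pow_zero, one_mul]
  have xi : x⁻¹ = x * x := by rw [inv_eq_iff_mul_eq_one, ← mul_assoc]; exact x3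
  have s1 : SemiconjBy x c (x * c * x⁻¹) := by simp [SemiconjBy]
  have s2 : SemiconjBy x (x * c * x⁻¹) (x ^ 2 * c * (x ^ 2)⁻¹) := by
    simp only [SemiconjBy, pow_succ, pow_zero, one_mul]; group
  have s3 : SemiconjBy x (x ^ 2 * c * (x ^ 2)⁻¹) c := by
    have : x * (x ^ 2 * c * (x ^ 2)⁻¹) = x ^ 3 * c * (x ^ 3)⁻¹ * x := by group
    simp only [SemiconjBy]; rw [this, xx]; simp
  have t1 : SemiconjBy a c c := ac
  have tx : SemiconjBy a x (x ^ 2) := axa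
  have tx2 : SemiconjBy a (x ^ 2) x := by
    have := tx.pow_right 2
    rw [← pow_mul] at this
    have e : x ^ (2 * 2) = x := by rw [show 2 * 2 = 3 + 1 from rfl, pow_succ, xx, one_mul]
    rwa [e] at this
  have t2 : SemiconjBy a (x * c * x⁻¹) (x ^ 2 * c * (x ^ 2)⁻¹) :=
    (tx.mul_right t1).mul_right tx.inv_right
  have t3 : SemiconjBy a (x ^ 2 * c * (x ^ 2)⁻¹) (x * c * x⁻¹) :=
    (tx2.mul_right t1).mul_right tx2.inv_right
  have k01 : Commute c (x * c * x⁻¹) := comm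
  have k12 : Commute (x * c * x⁻¹) (x ^ 2 * c * (x ^ 2)⁻¹) := by
    have e1 := s1.eq
    have := congrArg (fun y => x * y * x⁻¹) comm
    simp only [Commute, SemiconjBy]
    calc _ = x * (c * (x * c * x⁻¹)) * x⁻¹ := by group
      _ = x * ((x * c * x⁻¹) * c) * x⁻¹ := this
      _ = _ := by simp only [pow_succ, pow_zero, one_mul]; group
  have k02 : Commute c (x ^ 2 * c * (x ^ 2)⁻¹) := by
    have := (t1.mul_right t2).eq
    have h2 := (t2.mul_right t1).eq
    have h3 : a * (c * (x * c * x⁻¹)) = a * ((x * c * x⁻¹) * c) := by rw [comm]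
    rw [this, h2] at h3
    exact mul_right_cancel h3
  refine ⟨?_, ?_, ?_⟩
  · simp only [wordOf, pow_succ', mul_assoc]
  · simp only [wordOf]
    set c1 := x * c * x⁻¹
    set c2 := x ^ 2 * c * (x ^ 2)⁻¹
    have e1 := (s1.pow_right i).mul_right (s2.pow_right j) |>.mul_right (s3.pow_right k)
    have e2 : c1 ^ i * c2 ^ j * c ^ k = c ^ k * c1 ^ i * c2 ^ j := by
      have := ((k01.pow_pow k i).mul_right (k02.pow_pow k j)).eq
      rw [← this]; simp only [mul_assoc]
    rw [e2] at e1
    rw [← mul_assoc, ← mul_assoc, e1.eq, pow_succ']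
    simp only [mul_assoc]
  · simp only [wordOf]
    set c1 := x * c * x⁻¹
    set c2 := x ^ 2 * c * (x ^ 2)⁻¹
    have e1 := ((t1.pow_right i).mul_right (t2.pow_right j) |>.mul_right (t3.pow_right k)).mul_right
      (tx.pow_right l)
    have e2 : c ^ i * c2 ^ j * c1 ^ k = c ^ i * c1 ^ k * c2 ^ j := by
      rw [mul_assoc, mul_assoc, (k12.pow_pow k j).eq]
    rw [e2, ← pow_mul] at e1
    rw [← mul_assoc, e1.eq, pow_succ']
    simp only [mul_assoc]

theorem Rels.exists_word {Q : Type*} [Group Q] {a x c : Q} (h : Rels a x c) (g : Q)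
    (hg : g ∈ Subgroup.closure {a, x, c}) : ∃ i j k l m, g = wordOf a x c i j k l m := by
  have ai : a⁻¹ = a := inv_eq_of_mul_eq_one_left h.aa
  have ci : c⁻¹ = c := inv_eq_of_mul_eq_one_left h.cc
  have xi : x⁻¹ = x * x := by
    rw [inv_eq_iff_mul_eq_one, ← h.xx]; simp only [pow_succ, pow_zero, one_mul, mul_assoc]
  induction hg using Subgroup.closure_induction_left with
  | one => exact ⟨0, 0, 0, 0, 0, by simp [wordOf]⟩
  | mul_left y hy z hz ih =>
    obtain ⟨i, j, k, l, m, rfl⟩ := ih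
    rcases hy with rfl | rfl | rfl
    · exact ⟨_, _, _, _, _, (h.mul_word i j k l m).2.2⟩
    · exact ⟨_, _, _, _, _, (h.mul_word i j k l m).2.1⟩
    · exact ⟨_, _, _, _, _, (h.mul_word i j k l m).1⟩
  | inv_mul_cancel y hy z hz ih =>
    obtain ⟨i, j, k, l, m, rfl⟩ := ih
    rcases hy with rfl | rfl | rfl
    · rw [ai]; exact ⟨_, _, _, _, _, (h.mul_word i j k l m).2.2⟩
    · rw [xi, mul_assoc, (h.mul_word i j k l m).2.1]
      exact ⟨_, _, _, _, _, (h.mul_word _ _ _ _ _).2.1⟩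
    · rw [ci]; exact ⟨_, _, _, _, _, (h.mul_word i j k l m).1⟩

theorem Rels.card_le {Q : Type*} [Group Q] {a x c : Q} (h : Rels a x c) :
    Finite (Subgroup.closure {a, x, c}) ∧ Nat.card (Subgroup.closure {a, x, c}) ≤ 48 := by
  let T := Fin 2 × Fin 2 × Fin 2 × Fin 3 × Fin 2
  let w : T → Q := fun t => wordOf a x c t.1 t.2.1 t.2.2.1 t.2.2.2.1 t.2.2.2.2
  have hsub : ((Subgroup.closure {a, x, c} : Subgroup Q) : Set Q) ⊆ Set.range w := by
    intro g hg
    obtain ⟨i, j, k, l, m, rfl⟩ := h.exists_word g hg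
    have c2 : c ^ 2 = 1 := by rw [pow_two, h.cc]
    have a2 : a ^ 2 = 1 := by rw [pow_two, h.aa]
    refine ⟨(⟨i % 2, by omega⟩, ⟨j % 2, by omega⟩, ⟨k % 2, by omega⟩, ⟨l % 3, by omega⟩,
      ⟨m % 2, by omega⟩), ?_⟩
    simp only [w, wordOf]
    rw [← pow_mod_of c2, ← pow_mod_of a2, ← pow_mod_of h.xx, ← pow_mod_of, ← pow_mod_of]
    · rw [conj_pow, c2]; group
    · rw [conj_pow, c2]; group
  have hfin : (Set.range w).Finite := Set.finite_range w
  refine ⟨hfin.subset hsub, ?_⟩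
  have h1 := Set.ncard_le_ncard hsub hfin
  have h2 : (Set.range w).ncard ≤ 48 := by
    rw [← Set.image_univ]
    refine (Set.ncard_image_le Set.finite_univ).trans ?_
    simp [Set.ncard_univ, T]
  exact h1.trans h2

abbrev MM := Equiv.Perm (Fin 4) × Multiplicative (ZMod 2)

def aM : MM := (Equiv.swap 0 1, 1)
def xM : MM := (Equiv.swap 0 1 * Equiv.swap 1 2, 1)
def cM : MM := (Equiv.swap 0 1 * Equiv.swap 2 3, Multiplicative.ofAdd 1)

theorem relsM : Rels aM xM cM := by
  constructor <;> decide

set_option maxRecDepth 100000 in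
set_option maxHeartbeats 4000000 in
theorem genM : ∀ p : MM, ∃ (i j k : Fin 2) (l : Fin 3) (m : Fin 2),
    p = wordOf aM xM cM i j k l m := by
  unfold wordOf
  decide

theorem word_mem {Q : Type*} [Group Q] (a x c : Q) (i j k l m : ℕ) :
    wordOf a x c i j k l m ∈ Subgroup.closure {a, x, c} := by
  have ha : a ∈ Subgroup.closure {a, x, c} := Subgroup.subset_closure (by simp)
  have hx : x ∈ Subgroup.closure {a, x, c} := Subgroup.subset_closure (by simp)
  have hc : c ∈ Subgroup.closure {a, x, c} := Subgroup.subset_closure (by simp)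
  unfold wordOf
  refine mul_mem (mul_mem (mul_mem (mul_mem ?_ ?_) ?_) ?_) ?_
  · exact pow_mem hc _
  · exact pow_mem (mul_mem (mul_mem hx hc) (inv_mem hx)) _
  · exact pow_mem (mul_mem (mul_mem (pow_mem hx _) hc) (inv_mem (pow_mem hx _))) _
  · exact pow_mem hx _
  · exact pow_mem ha _

theorem genM_top : Subgroup.closure {aM, xM, cM} = ⊤ := by
  rw [eq_top_iff]
  rintro p -
  obtain ⟨i, j, k, l, m, rfl⟩ := genM p
  exact word_mem _ _ _ _ _ _ _ _

theorem card_M : Nat.card MM = 48 := by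
  rw [Nat.card_prod, Nat.card_eq_fintype_card, Nat.card_eq_fintype_card, Fintype.card_perm]
  rfl

theorem iso_of_rels {G : Type*} [Group G] [Finite G] (hG : Nat.card G = 48) {a x c : G}
    (h : Rels a x c) (hgen : Subgroup.closure {a, x, c} = ⊤) : Nonempty (G ≃* MM) := by
  have hr : Rels (a, aM) (x, xM) (c, cM) := by
    have h' := relsM
    constructor
    · exact Prod.ext h.aa h'.aa
    · exact Prod.ext h.xx h'.xx
    · exact Prod.ext h.axa h'.axa
    · exact Prod.ext h.cc h'.cc
    · exact Prod.ext h.ac h'.ac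
    · exact Prod.ext h.comm h'.comm
  obtain ⟨hf, hcard⟩ := hr.card_le
  set Γ := Subgroup.closure {(a, aM), (x, xM), (c, cM)} with hΓ
  let p1 : Γ →* G := (MonoidHom.fst G MM).comp Γ.subtype
  let p2 : Γ →* MM := (MonoidHom.snd G MM).comp Γ.subtype
  have s1 : Function.Surjective p1 := by
    rw [← MonoidHom.range_eq_top, MonoidHom.range_comp, Subgroup.range_subtype, hΓ,
      MonoidHom.map_closure, ← hgen]
    simp [Set.image_insert_eq]
  have s2 : Function.Surjective p2 := by
    rw [← MonoidHom.range_eq_top, MonoidHom.range_comp, Subgroup.range_subtype, hΓ,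
      MonoidHom.map_closure, ← genM_top]
    simp [Set.image_insert_eq]
  have b1 : Function.Bijective p1 :=
    Function.Surjective.bijective_of_nat_card_le s1 (by rw [hG]; exact hcard)
  have b2 : Function.Bijective p2 :=
    Function.Surjective.bijective_of_nat_card_le s2 (by rw [card_M]; exact hcard)
  exact ⟨(MulEquiv.ofBijective p1 b1).symm.trans (MulEquiv.ofBijective p2 b2)⟩

/-- In a normal subgroup of order 8, an involution commutes with its conjugate by an
element of order 3. -/
theorem comm_of_card_eight {G : Type*} [Group G] [Finite G] (N : Subgroup G) [hn : N.Normal]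
    (hN : Nat.card N = 8) (x c : G) (hx : x ^ 3 = 1) (hc : c * c = 1) (hcN : c ∈ N) :
    c * (x * c * x⁻¹) = (x * c * x⁻¹) * c := by
  by_contra hne
  obtain ⟨d, hd⟩ : ∃ d, d = x * c * x⁻¹ := ⟨_, rfl⟩
  obtain ⟨e, he⟩ : ∃ e, e = x * d * x⁻¹ := ⟨_, rfl⟩
  have hce : x * e * x⁻¹ = c := by
    have : x * e * x⁻¹ = x ^ 3 * c * (x ^ 3)⁻¹ := by rw [he, hd]; simp only [pow_succ, pow_zero, one_mul]; group
    rw [this, hx]; simp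
  rw [← hd] at hne
  let f := MulAut.conj x
  have fc : f c = d := by simp [f, hd]
  have fd : f d = e := by simp [f, he]
  have fe : f e = c := by simp [f, hce]
  have hdN : d ∈ N := hd ▸ hn.conj_mem c hcN x
  have heN : e ∈ N := he ▸ hn.conj_mem d hdN x
  have hdd : d * d = 1 := by rw [← fc, ← map_mul, hc, map_one]
  have hee : e * e = 1 := by rw [← fd, ← map_mul, hdd, map_one]
  have hne1 : d * e ≠ e * d := fun h => hne (f.injective (by rw [map_mul, map_mul, fc, fd, h]))
  have hne2 : e * c ≠ c * e := fun h => hne1 (f.injective (by rw [map_mul, map_mul, fd, fe, h]))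
  have key : d * e ≠ c * d := by
    intro h
    have e1 : e = d * c * d := by
      rw [mul_assoc, ← h, ← mul_assoc, hdd, one_mul]
    have h' : e * c = d * e := by
      have := congrArg f h
      rwa [map_mul, map_mul, fc, fd, fe] at this
    have h3 : (c * d) ^ 3 = 1 := by
      have : (c * d) ^ 3 = (c * d) * (d * e) * (e * c) := by
        rw [h', h, pow_succ, pow_two]
      rw [this]
      calc c * d * (d * e) * (e * c) = c * (d * d) * (e * e) * c := by group
        _ = 1 := by rw [hdd, hee, mul_one, mul_one, hc]
    have h1 : orderOf (c * d) ∣ 3 := orderOf_dvd_of_pow_eq_one h3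
    have h2 : orderOf (c * d) ∣ 8 := hN ▸ Subgroup.orderOf_dvd_natCard _ (mul_mem hcN hdN)
    have h4 := Nat.dvd_gcd h1 h2
    norm_num at h4
    apply hne
    have h5 := congrArg (·⁻¹) h4
    simp only [mul_inv_rev, inv_one] at h5
    rw [h4, ← h5, inv_eq_of_mul_eq_one_left hc, inv_eq_of_mul_eq_one_left hdd]
  have key1 : e * c ≠ d * e := fun h => key (f.injective (by rw [map_mul, map_mul, fc, fd, fe, h]))
  have key2 : c * d ≠ e * c := fun h => key1 (f.injective (by rw [map_mul, map_mul, fc, fd, fe, h]))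
  have inv3 : ∀ y z w : G, y * y = 1 → z * z = 1 → w * w = 1 → y = z * w → z * w = w * z := by
    intro y z w hy hz hw h
    have h1 : y⁻¹ = y := inv_eq_of_mul_eq_one_left hy
    have h2 : z⁻¹ = z := inv_eq_of_mul_eq_one_left hz
    have h3 : w⁻¹ = w := inv_eq_of_mul_eq_one_left hw
    rw [← h, ← h1, h, mul_inv_rev, h2, h3]
  have invs : ∀ y z u v : G, y * y = 1 → z * z = 1 → u * u = 1 → v * v = 1 → y * z = u * v →
      z * y = v * u := by
    intro y z u v hy hz hu hv h
    have h1 : y⁻¹ = y := inv_eq_of_mul_eq_one_left hy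
    have h2 : z⁻¹ = z := inv_eq_of_mul_eq_one_left hz
    have h3 : u⁻¹ = u := inv_eq_of_mul_eq_one_left hu
    have h4 : v⁻¹ = v := inv_eq_of_mul_eq_one_left hv
    have := congrArg (·⁻¹) h
    simpa only [mul_inv_rev, h1, h2, h3, h4] using this
  have hcd : c ≠ d := fun h => hne (by rw [h])
  have hde : d ≠ e := fun h => hne1 (by rw [h])
  have hec : e ≠ c := fun h => hne2 (by rw [h])
  have hc1 : c ≠ 1 := fun h => hne (by rw [h]; simp)
  have hd1 : d ≠ 1 := fun h => hne (by rw [h]; simp)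
  have he1 : e ≠ 1 := fun h => hne2 (by rw [h]; simp)
  have ic : c⁻¹ = c := inv_eq_of_mul_eq_one_left hc
  have id' : d⁻¹ = d := inv_eq_of_mul_eq_one_left hdd
  have ie : e⁻¹ = e := inv_eq_of_mul_eq_one_left hee
  have hnd : [1, c, d, e, c * d, d * c, d * e, e * d, e * c].Nodup := by
    have := inv3 c d e hc hdd hee
    have := inv3 c e d hc hee hdd
    have := inv3 d e c hdd hee hc
    have := inv3 e c d hee hc hdd
    have := inv3 e d c hee hdd hc
    have := invs d c e d hdd hc hee hdd
    have := invs e d e c hee hdd hee hc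
    have := invs d c d e hdd hc hdd hee
    simp [eq_comm (a := (1 : G)), mul_eq_one_iff_eq_inv, ic, id', ie]
    grind
  classical
  have hsub : ([1, c, d, e, c * d, d * c, d * e, e * d, e * c].toFinset : Set G) ⊆ (N : Set G) := by
    intro y hy
    simp at hy
    rcases hy with rfl | rfl | rfl | rfl | rfl | rfl | rfl | rfl | rfl <;>
      first | assumption | exact one_mem _ | (apply mul_mem <;> assumption)
  have h9 := Set.ncard_le_ncard hsub (Set.toFinite _)
  rw [Set.ncard_coe_finset, List.toFinset_card_of_nodup hnd] at h9
  have h8 : (N : Set G).ncard = 8 := hN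
  rw [h8] at h9
  simp at h9

theorem d3_fact : ∀ g : DihedralGroup 3, g ≠ 1 → g * g = 1 →
    g * DihedralGroup.r 1 = DihedralGroup.r 1 ^ 2 * g ∧
    ∀ h : DihedralGroup 3, ∃ (i : Fin 3) (j : Fin 2),
      h = DihedralGroup.r 1 ^ (i : ℕ) * g ^ (j : ℕ) := by decide

theorem d2_fact : ∀ g : DihedralGroup 2, g ≠ 1 → ∃ c : DihedralGroup 2, c * c = 1 ∧
    g * c = c * g ∧ ∀ h : DihedralGroup 2, ∃ (i : Fin 2) (j : Fin 2),
      h = g ^ (i : ℕ) * c ^ (j : ℕ) := by decide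

theorem s3_fact : ∀ a c : Equiv.Perm (Fin 3), a ≠ 1 → a * a = 1 → c * c = 1 → a * c = c * a →
    c = 1 ∨ c = a := by decide

theorem order_48_gen_by_D3_D2_iso_S4_x_Z2 (G : Type*) [Group G] [Finite G]
    (hG : Nat.card G = 48) (U V : Subgroup G)
    (hU : Nonempty (U ≃* DihedralGroup 3))
    (hV : Nonempty (V ≃* DihedralGroup 2))
    (hUV : Nonempty ((↥(U ⊓ V)) ≃* Multiplicative (ZMod 2)))
    (hgen : U ⊔ V = ⊤) :
    Nonempty (G ≃* Equiv.Perm (Fin 4) × Multiplicative (ZMod 2)) := by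
  obtain ⟨eU⟩ := hU
  obtain ⟨eV⟩ := hV
  obtain ⟨eW⟩ := hUV
  -- the common involution
  obtain ⟨a, haU, haV, ha1, haa⟩ : ∃ a : G, a ∈ U ∧ a ∈ V ∧ a ≠ 1 ∧ a * a = 1 := by
    let w := eW.symm (Multiplicative.ofAdd 1)
    refine ⟨w, w.2.1, w.2.2, ?_, ?_⟩
    · intro h
      have : w = 1 := Subtype.ext h
      have h2 : Multiplicative.ofAdd (1 : ZMod 2) = 1 := eW.symm.map_eq_one_iff.mp this
      exact absurd h2 (by decide)
    · have : w * w = 1 := by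
        rw [← map_mul, ← map_one eW.symm]; exact congrArg _ (by decide)
      exact congrArg Subtype.val this
  -- the element of order three
  obtain ⟨x, hx1, hx3, hax, hUx⟩ : ∃ x : G, x ≠ 1 ∧ x ^ 3 = 1 ∧ a * x = x ^ 2 * a ∧
      ∀ u ∈ U, ∃ i j : ℕ, u = x ^ i * a ^ j := by
    obtain ⟨h1, h2⟩ := d3_fact (eU ⟨a, haU⟩)
      (fun h => ha1 (congrArg Subtype.val (eU.map_eq_one_iff.mp h)))
      (by rw [← map_mul, ← map_one eU]; exact congrArg _ (Subtype.ext haa))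
    let x := eU.symm (DihedralGroup.r 1)
    have ex : eU x = DihedralGroup.r 1 := eU.apply_symm_apply _
    rw [← ex] at h1 h2
    refine ⟨x, ?_, ?_, ?_, ?_⟩
    · intro h
      have : x = 1 := Subtype.ext h
      rw [this, map_one] at ex
      exact absurd ex (by decide)
    · have : x ^ 3 = 1 := eU.injective (by rw [map_pow, ex, map_one]; decide)
      exact congrArg Subtype.val this
    · have : (⟨a, haU⟩ : U) * x = x ^ 2 * ⟨a, haU⟩ :=
        eU.injective (by rw [map_mul, map_mul, map_pow, h1])
      exact congrArg Subtype.val this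
    · intro u hu
      obtain ⟨i, j, hij⟩ := h2 (eU ⟨u, hu⟩)
      have : (⟨u, hu⟩ : U) = x ^ (i : ℕ) * ⟨a, haU⟩ ^ (j : ℕ) :=
        eU.injective (by rw [map_mul, map_pow, map_pow, hij])
      exact ⟨i, j, congrArg Subtype.val this⟩
  obtain ⟨c, hcc, hac, hVc⟩ : ∃ c : G, c * c = 1 ∧ a * c = c * a ∧
      ∀ v ∈ V, ∃ i j : ℕ, v = a ^ i * c ^ j := by
    obtain ⟨c', h1, h2, h3⟩ := d2_fact (eV ⟨a, haV⟩)
      (fun h => ha1 (congrArg Subtype.val (eV.map_eq_one_iff.mp h)))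
    obtain ⟨c, rfl⟩ := eV.surjective c'
    refine ⟨c, ?_, ?_, ?_⟩
    · have : c * c = 1 := eV.injective (by rw [map_mul, h1, map_one])
      exact congrArg Subtype.val this
    · have : (⟨a, haV⟩ : V) * c = c * ⟨a, haV⟩ :=
        eV.injective (by rw [map_mul, map_mul, h2])
      exact congrArg Subtype.val this
    · intro u hu
      obtain ⟨i, j, hij⟩ := h3 (eV ⟨u, hu⟩)
      have : (⟨u, hu⟩ : V) = ⟨a, haV⟩ ^ (i : ℕ) * c ^ (j : ℕ) :=
        eV.injective (by rw [map_mul, map_pow, map_pow, hij])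
      exact ⟨i, j, congrArg Subtype.val this⟩
  have hcl : ∀ K : Subgroup G, a ∈ K → x ∈ K → c ∈ K → K = ⊤ := by
    intro K ha hx hc
    rw [eq_top_iff, ← hgen, sup_le_iff]
    constructor
    · intro u hu
      obtain ⟨i, j, rfl⟩ := hUx u hu
      exact mul_mem (pow_mem hx _) (pow_mem ha _)
    · intro u hu
      obtain ⟨i, j, rfl⟩ := hVc u hu
      exact mul_mem (pow_mem ha _) (pow_mem hc _)
  -- the action on the three cosets of a Sylow 2-subgroup
  obtain ⟨P, hP⟩ : ∃ P : Subgroup G, Nat.card P = 2 ^ 4 := by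
    have : Fact (Nat.Prime 2) := ⟨Nat.prime_two⟩
    exact Sylow.exists_subgroup_card_pow_prime 2 (by rw [hG]; norm_num)
  have hidx : Nat.card (G ⧸ P) = 3 := by
    have := P.card_mul_index
    rw [hP, hG, Subgroup.index] at this
    omega
  let ε : (G ⧸ P) ≃ Fin 3 := Finite.equivFinOfCardEq hidx
  let f : G →* Equiv.Perm (Fin 3) :=
    ε.permCongrHom.toMonoidHom.comp (MulAction.toPermHom G (G ⧸ P))
  have hker : f.ker ≤ P := by
    intro g hg
    have h1 : MulAction.toPermHom G (G ⧸ P) g = 1 := by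
      have : ε.permCongrHom (MulAction.toPermHom G (G ⧸ P) g) = 1 := hg
      exact ε.permCongrHom.map_eq_one_iff.mp this
    have h2 : g ∈ (MulAction.toPermHom G (G ⧸ P)).ker := h1
    rw [← Subgroup.normalCore_eq_ker] at h2
    exact Subgroup.normalCore_le P h2
  have hd16 : Nat.card f.ker ∣ 2 ^ 4 := hP ▸ Subgroup.card_dvd_of_le hker
  have hidx6 : f.ker.index ∣ 6 := by
    rw [Subgroup.index_ker]
    have := Subgroup.card_subgroup_dvd_card f.range
    rwa [Nat.card_eq_fintype_card (α := Equiv.Perm (Fin 3)), Fintype.card_perm] at this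
  have hmul := f.ker.card_mul_index
  rw [hG] at hmul
  have hxker : x ∉ f.ker := by
    intro hx
    have h1 : orderOf x ∣ 3 := orderOf_dvd_of_pow_eq_one hx3
    have h2 : orderOf x ∣ 2 ^ 4 := (Subgroup.orderOf_dvd_natCard _ hx).trans hd16
    have h3 := Nat.dvd_gcd h1 h2
    norm_num at h3
    exact hx1 h3
  have haker : f a ≠ 1 := by
    intro h
    apply hxker
    have h1 := congrArg f hax
    rw [map_mul, map_mul, map_pow, h, one_mul, mul_one, pow_two] at h1
    exact (mul_eq_left.mp h1.symm)
  have hfa : f a * f a = 1 := by rw [← map_mul, haa, map_one]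
  have h8 : Nat.card f.ker = 8 := by
    have hle : f.ker.index ≤ 6 := Nat.le_of_dvd (by norm_num) hidx6
    have hne3 : f.ker.index ≠ 3 := by
      intro h3
      apply haker
      have hc3 : Nat.card f.range = 3 := by rw [← Subgroup.index_ker, h3]
      have h1 : orderOf (f a) ∣ 3 := by
        exact (Subgroup.orderOf_dvd_natCard f.range (MonoidHom.mem_range.mpr ⟨a, rfl⟩)).trans
          (dvd_of_eq hc3)
      have h2 : orderOf (f a) ∣ 2 := orderOf_dvd_of_pow_eq_one (by rw [pow_two, hfa])
      have h3 := Nat.dvd_gcd h1 h2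
      norm_num at h3
      exact h3
    obtain ⟨k, hk, hk'⟩ := (Nat.dvd_prime_pow Nat.prime_two).mp hd16
    rw [hk'] at hmul ⊢
    interval_cases k <;> omega
  -- conclusion, once some `c` lies in the kernel
  have fin : ∀ c' : G, c' ∈ f.ker → c' * c' = 1 → a * c' = c' * a →
      (∀ K : Subgroup G, a ∈ K → x ∈ K → c' ∈ K → K = ⊤) →
      Nonempty (G ≃* Equiv.Perm (Fin 4) × Multiplicative (ZMod 2)) := by
    intro c' h1 h2 h3 h4
    refine iso_of_rels hG (a := a) (x := x) (c := c')
      ⟨haa, hx3, hax, h2, h3, comm_of_card_eight f.ker h8 x c' hx3 h2 h1⟩ ?_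
    apply h4 <;> exact Subgroup.subset_closure (by simp)
  have hfc : f c * f c = 1 := by rw [← map_mul, hcc, map_one]
  have hfac : f a * f c = f c * f a := by rw [← map_mul, hac, map_mul]
  rcases s3_fact (f a) (f c) haker hfa hfc hfac with h | h
  · exact fin c h hcc hac hcl
  · refine fin (a * c) ?_ ?_ ?_ ?_
    · rw [MonoidHom.mem_ker, map_mul, h, hfa]
    · calc a * c * (a * c) = (a * c) * (c * a) := by rw [← hac]
        _ = a * (c * c) * a := by group
        _ = 1 := by rw [hcc, mul_one, haa]
    · rw [mul_assoc, ← hac]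
    · intro K ha hx hc
      exact hcl K ha hx ((Subgroup.mul_mem_cancel_left K ha).mp hc)
end
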